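/- arXiv:math/0206145 — 5 statements merged into one kernel-verified Lean document; each statement's English description precedes it below -/
import Mathlib

section
/- For every integer u, the product u(u+1) is divisible by 16256 if and only if u is congruent to 0, 127, 16128, or 16255 modulo 16256 (here 16256 = 2⁷·127). -/
/-! The factors of `16256 = 127 * 128` are consecutive prime powers. Since `u` and `u + 1` are
coprime, each factor divides exactly one of them, which gives four systems of two congruences. As
`127 + 1 = 128`, the two mixed systems have the explicit solutions `u = 127` and `u = -128`. -/

theorem isPrimePow_dvd_mul_iff_of_isRelPrime {M : Type*} [CommMonoidWithZero M] [IsCancelMulZero M]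
    {q a b : M} (hq : IsPrimePow q) (hab : IsRelPrime a b) : q ∣ a * b ↔ q ∣ a ∨ q ∣ b := by
  obtain ⟨p, k, hp, -, rfl⟩ := hq
  refine ⟨fun h ↦ ?_, fun h ↦ h.elim (·.mul_right b) (·.mul_left a)⟩
  by_cases ha : p ∣ a
  · have hb : ¬p ∣ b := fun hb ↦ hp.not_isUnit (hab ha hb)
    exact .inl (hp.pow_dvd_of_dvd_mul_right k hb h)
  · exact .inr (hp.pow_dvd_of_dvd_mul_left k ha h)

section CommRing

variable {R : Type*} [CommRing R]

theorem isCoprime_add_one_right (a : R) : IsCoprime a (a + 1) :=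
  ⟨-1, 1, by ring⟩

theorem mul_add_one_dvd_iff {m a : R} : m * (m + 1) ∣ a ↔ m ∣ a ∧ m + 1 ∣ a :=
  ⟨fun h ↦ ⟨dvd_of_mul_right_dvd h, dvd_of_mul_left_dvd h⟩,
    fun h ↦ (isCoprime_add_one_right m).mul_dvd h.1 h.2⟩

theorem mul_add_one_dvd_sub_iff {m u : R} : m * (m + 1) ∣ u - m ↔ m ∣ u ∧ m + 1 ∣ u + 1 := by
  rw [mul_add_one_dvd_iff, dvd_sub_self_right, ← add_sub_add_right_eq_sub u m 1,
    dvd_sub_self_right]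

theorem mul_add_one_dvd_add_iff {m u : R} :
    m * (m + 1) ∣ u + (m + 1) ↔ m ∣ u + 1 ∧ m + 1 ∣ u := by
  rw [mul_add_one_dvd_iff, dvd_add_self_right, add_left_comm, add_comm m, dvd_add_self_right]

theorem mul_add_one_dvd_mul_add_one_iff [IsCancelMulZero R] {m u : R} (hm : IsPrimePow m)
    (hm' : IsPrimePow (m + 1)) :
    m * (m + 1) ∣ u * (u + 1) ↔
      m * (m + 1) ∣ u ∨ m * (m + 1) ∣ u - m ∨ m * (m + 1) ∣ u + (m + 1) ∨
        m * (m + 1) ∣ u + 1 := by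
  have hu : IsRelPrime u (u + 1) := (isCoprime_add_one_right u).isRelPrime
  rw [mul_add_one_dvd_sub_iff, mul_add_one_dvd_add_iff]
  simp only [mul_add_one_dvd_iff, isPrimePow_dvd_mul_iff_of_isRelPrime hm hu,
    isPrimePow_dvd_mul_iff_of_isRelPrime hm' hu]
  tauto

end CommRing

/-- `16256 = 2⁷·127` divides `u(u+1)` if and only if
`u ≡ 0, 127, 16128, 16255 (mod 16256)`. -/
theorem sixteen_thousand_dvd_u_mul_succ_iff (u : ℤ) :
    (16256 : ℤ) ∣ u * (u + 1) ↔
      u % 16256 = 0 ∨ u % 16256 = 127 ∨ u % 16256 = 16128 ∨ u % 16256 = 16255 := by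
  have h127 : IsPrimePow (127 : ℤ) := (Int.prime_ofNat_iff.mpr (by norm_num)).isPrimePow
  have h128 : IsPrimePow (127 + 1 : ℤ) := ⟨2, 7, Int.prime_two, by norm_num, by norm_num⟩
  have h_classes : 16256 ∣ u * (u + 1) ↔
      16256 ∣ u ∨ 16256 ∣ u - 127 ∨ 16256 ∣ u + 128 ∨ 16256 ∣ u + 1 :=
    mul_add_one_dvd_mul_add_one_iff h127 h128
  rw [h_classes]
  omega
end

section
/- Let G be an additive abelian group. Suppose there exist: an injective homomorphism a : ℤ → G and a surjective homomorphism b : G → ℤ/2 with range a = ker b; an injective homomorphism c : ℤ → G and a surjective homomorphism d : G → ℤ/24 with range c = ker d; and suppose the composite d∘a : ℤ → ℤ/24 is surjective. Then G ≅ ℤ ⊕ ℤ/2; in particular the torsion subgroup of G is cyclic of order 2. -/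
/-!
Composing `d` with the reduction `ZMod m → ZMod n` gives `e : G →+ ZMod n` with `e ∘ a` still onto.
A lift `g` of `1` along `b` has `n • g = a k` for some integer `k`. Then `e (a k) = n • e g = 0`,
so `n ∣ k` because `e (a 1)` generates `ZMod n`. Correcting `g` by `a (k / n)` yields a lift killed
by `n`, which splits the first sequence.
-/

theorem nonempty_addEquiv_prod_of_exact_of_leftInverse {A G C : Type*} [AddCommGroup A]
    [AddCommGroup G] [AddCommGroup C] {a : A →+ G} {b : G →+ C} {s : C →+ G}
    (ha : Function.Injective a) (hab : Function.Exact a b) (hs : Function.LeftInverse b s) :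
    Nonempty (G ≃+ A × C) := by
  have hab' : Function.Exact a.toIntLinearMap b.toIntLinearMap := hab
  have hs' : b.toIntLinearMap ∘ₗ s.toIntLinearMap = LinearMap.id := LinearMap.ext hs
  exact ⟨(hab'.splitSurjectiveEquiv ha ⟨s.toIntLinearMap, hs'⟩).1.toAddEquiv⟩

section ZMod

variable {n : ℕ} {G : Type*} [AddCommGroup G]

theorem exists_leftInverse_of_nsmul_eq_zero {b : G →+ ZMod n} {t : G} (hbt : b t = 1)
    (ht : n • t = 0) : ∃ s : ZMod n →+ G, Function.LeftInverse b s := by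
  refine ⟨ZMod.lift n ⟨zmultiplesHom G t, by simpa using ht⟩, fun y ↦ ?_⟩
  obtain ⟨k, rfl⟩ := ZMod.intCast_surjective y
  simp [hbt]

theorem exists_map_eq_one_and_nsmul_eq_zero {A : Type*} [AddCommGroup A] {a : A →+ G}
    {b : G →+ ZMod n} (hb : Function.Surjective b) (hab : Function.Exact a b)
    (hdiv : ∀ (x : A) (g : G), n • g = a x → ∃ z, n • z = x) :
    ∃ t : G, b t = 1 ∧ n • t = 0 := by
  obtain ⟨g, hg⟩ := hb 1
  obtain ⟨x, hx⟩ := (hab (n • g)).mp (by simp)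
  obtain ⟨z, rfl⟩ := hdiv x g hx.symm
  refine ⟨g - a z, ?_, ?_⟩
  · rw [map_sub, hg, hab.apply_apply_eq_zero, sub_zero]
  · rw [nsmul_sub, ← map_nsmul, hx, sub_self]

theorem natCast_dvd_of_nsmul_eq_of_surjective_comp {a : ℤ →+ G} {e : G →+ ZMod n}
    (hea : Function.Surjective (e.comp a)) {k : ℤ} {g : G} (hg : n • g = a k) : (n : ℤ) ∣ k := by
  obtain ⟨j, hj⟩ := hea 1
  rw [AddMonoidHom.comp_apply] at hj
  rw [← ZMod.intCast_zmod_eq_zero_iff_dvd]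
  calc (k : ZMod n) = k • e (a j) := by rw [hj, zsmul_one]
    _ = j • e (a k) := by simp only [← map_zsmul, smul_eq_mul, mul_comm]
    _ = j • n • e g := by rw [← hg, map_nsmul]
    _ = 0 := by rw [nsmul_eq_mul, CharP.cast_eq_zero, zero_mul, smul_zero]

end ZMod

theorem abelian_group_ext_computation_pi4_BTOP_general {n m : ℕ} (hnm : n ∣ m) {G : Type*}
    [AddCommGroup G] {a : ℤ →+ G} (ha : Function.Injective a) {b : G →+ ZMod n}
    (hb : Function.Surjective b) (hab : Function.Exact a b) {d : G →+ ZMod m}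
    (hda : Function.Surjective (d.comp a)) :
    Nonempty (G ≃+ ℤ × ZMod n) := by
  let e : G →+ ZMod n := (ZMod.castHom hnm (ZMod n)).toAddMonoidHom.comp d
  have hea : Function.Surjective (e.comp a) := (ZMod.castHom_surjective hnm).comp hda
  have hdiv (k : ℤ) (g : G) (hg : n • g = a k) : ∃ z : ℤ, n • z = k := by
    obtain ⟨z, rfl⟩ := natCast_dvd_of_nsmul_eq_of_surjective_comp hea hg
    exact ⟨z, nsmul_eq_mul n z⟩
  obtain ⟨t, hbt, ht⟩ := exists_map_eq_one_and_nsmul_eq_zero hb hab hdiv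
  obtain ⟨s, hs⟩ := exists_leftInverse_of_nsmul_eq_zero hbt ht
  exact nonempty_addEquiv_prod_of_exact_of_leftInverse ha hab hs

/-- If an abelian group `G` sits in a short exact sequence `0 → ℤ → G → ℤ/2 → 0` and in a
short exact sequence `0 → ℤ → G → ℤ/24 → 0` such that the composite `ℤ → G → ℤ/24` of the
first injection with the second surjection is onto, then `G ≅ ℤ ⊕ ℤ/2`. -/
theorem abelian_group_ext_computation_pi4_BTOP (G : Type*) [AddCommGroup G]
    (a : ℤ →+ G) (ha : Function.Injective a)
    (b : G →+ ZMod 2) (hb : Function.Surjective b)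
    (hab : a.range = b.ker)
    (c : ℤ →+ G) (hc : Function.Injective c)
    (d : G →+ ZMod 24) (hd : Function.Surjective d)
    (hcd : c.range = d.ker)
    (hda : Function.Surjective (d.comp a)) :
    Nonempty (G ≃+ ℤ × ZMod 2) :=
  abelian_group_ext_computation_pi4_BTOP_general (by norm_num : 2 ∣ 24) ha hb
    (AddMonoidHom.exact_iff.mpr hab.symm) hda
end

section
/- Let G be an additive abelian group. Suppose there exist: an injective homomorphism a : ℤ → G and a surjective homomorphism b : G → ℤ/28 with range a = ker b; an injective homomorphism c : ℤ → G and a surjective homomorphism d : G → ℤ/240 with range c = ker d; and suppose the composite d∘a : ℤ → ℤ/240 is surjective. Then G ≅ ℤ ⊕ ℤ/4; in particular the torsion subgroup of G is cyclic of order 4. -/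
/-!
Write `m = 28` and `n = 240`. Since `d ∘ a` is onto, `G` is generated by the images of `a` and `c`,
so `G` is the quotient of `ℤ × ℤ` by the relations `K = {(x, y) | a x + c y = 0}`. The projections
of `K` to the two factors are `ker (d ∘ a) = nℤ` and `ker (b ∘ c) = mℤ`, and the first one is
injective because `c` is; hence `K` is cyclic, generated by `(n, m)` or `(n, -m)`. A unimodular
change of coordinates moves this generator to `(0, gcd m n)`.
-/

open AddSubgroup Function

section AddCommGroup

variable {A B G H : Type*} [AddCommGroup A] [AddCommGroup B] [AddCommGroup G] [AddCommGroup H]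

theorem surjective_comp_iff_range_sup_ker_eq_top {f : A →+ G} {g : G →+ H} :
    Surjective (g.comp f) ↔ Surjective g ∧ f.range ⊔ g.ker = ⊤ := by
  rw [← comap_map_eq, ← AddMonoidHom.range_comp]
  constructor
  · intro h
    exact ⟨.of_comp h, by rw [AddMonoidHom.range_eq_top.2 h, comap_top]⟩
  · rintro ⟨hg, h⟩
    rw [← AddMonoidHom.range_eq_top, ← map_comap_eq_self_of_surjective hg (g.comp f).range, h,
      map_top_of_surjective g hg]

theorem surjective_coprod_iff_range_sup_range_eq_top {f : A →+ G} {g : B →+ G} :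
    Surjective (f.coprod g) ↔ f.range ⊔ g.range = ⊤ := by
  simp [eq_top_iff', mem_sup, Surjective]

theorem map_fst_ker_coprod (f : A →+ G) (g : B →+ G) :
    (f.coprod g).ker.map (.fst A B) = g.range.comap f := by
  ext x
  simp only [mem_map, AddMonoidHom.mem_ker, AddMonoidHom.coprod_apply, AddMonoidHom.coe_fst,
    Prod.exists, exists_and_right, exists_eq_right, mem_comap, AddMonoidHom.mem_range]
  constructor
  · rintro ⟨y, h⟩
    exact ⟨-y, by rw [map_neg, eq_comm, ← add_eq_zero_iff_eq_neg, h]⟩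
  · rintro ⟨y, h⟩
    exact ⟨-y, by rw [map_neg, h, add_neg_cancel]⟩

theorem map_snd_ker_coprod (f : A →+ G) (g : B →+ G) :
    (f.coprod g).ker.map (.snd A B) = f.range.comap g := by
  rw [← map_fst_ker_coprod g f]
  ext y
  simp [add_comm]

theorem injOn_fst_ker_coprod (f : A →+ G) {g : B →+ G} (hg : Injective g) :
    Set.InjOn Prod.fst ((f.coprod g).ker : Set (A × B)) := by
  rintro ⟨x, y⟩ h ⟨_, y'⟩ h' rfl
  simp only [SetLike.mem_coe, AddMonoidHom.mem_ker, AddMonoidHom.coprod_apply] at h h'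
  rw [hg (add_left_cancel (h.trans h'.symm))]

theorem exists_eq_zmultiples_of_map_eq_zmultiples {f : G →+ H} {K : AddSubgroup G} {x : H}
    (hf : Set.InjOn f K) (hK : K.map f = zmultiples x) :
    ∃ k, f k = x ∧ K = zmultiples k := by
  obtain ⟨k, hk, rfl⟩ : x ∈ K.map f := hK ▸ mem_zmultiples x
  refine ⟨k, rfl, le_antisymm (fun y hy ↦ ?_) (zmultiples_le.2 hk)⟩
  obtain ⟨r, hr⟩ : f y ∈ zmultiples (f k) := hK ▸ mem_map_of_mem f hy
  exact ⟨r, hf (zsmul_mem hk r) hy ((map_zsmul f r k).trans hr)⟩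

end AddCommGroup

theorem ker_eq_zmultiples_of_surjective {n : ℕ} {f : ℤ →+ ZMod n} (hf : Surjective f) :
    f.ker = zmultiples (n : ℤ) := by
  have f_apply (x : ℤ) : f x = x * f 1 := by
    rw [← zsmul_eq_mul, ← map_zsmul, smul_eq_mul, mul_one]
  obtain ⟨u, hu⟩ := hf 1
  have isUnit_f_one : IsUnit (f 1) := .of_mul_eq_one_right _ (f_apply u ▸ hu)
  ext x
  rw [AddMonoidHom.mem_ker, f_apply, isUnit_f_one.mul_left_eq_zero,
    ZMod.intCast_zmod_eq_zero_iff_dvd, Int.mem_zmultiples_iff]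

theorem exists_ker_coprod_eq_zmultiples {G : Type*} [AddCommGroup G] {m n : ℕ}
    {a : ℤ →+ G} {b : G →+ ZMod m} {c : ℤ →+ G} {d : G →+ ZMod n}
    (hab : a.range = b.ker) (hc : Injective c) (hcd : c.range = d.ker)
    (hda : Surjective (d.comp a)) (hbc : Surjective (b.comp c)) :
    ∃ q : ℤ, q.natAbs = m ∧ (a.coprod c).ker = zmultiples ((n : ℤ), q) := by
  have map_fst : (a.coprod c).ker.map (.fst ℤ ℤ) = zmultiples (n : ℤ) := by
    rw [map_fst_ker_coprod, hcd, AddMonoidHom.comap_ker, ker_eq_zmultiples_of_surjective hda]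
  have map_snd : (a.coprod c).ker.map (.snd ℤ ℤ) = zmultiples (m : ℤ) := by
    rw [map_snd_ker_coprod, hab, AddMonoidHom.comap_ker, ker_eq_zmultiples_of_surjective hbc]
  obtain ⟨⟨_, q⟩, rfl, hq⟩ :=
    exists_eq_zmultiples_of_map_eq_zmultiples (injOn_fst_ker_coprod a hc) map_fst
  refine ⟨q, ?_, hq⟩
  have zmultiples_eq : zmultiples q = zmultiples (m : ℤ) := by
    rw [← map_snd, hq, AddMonoidHom.map_zmultiples, AddMonoidHom.coe_snd]
  simpa only [Int.index_zmultiples, Int.natAbs_natCast] using congrArg index zmultiples_eq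

theorem exists_linearEquiv_apply_eq_zero_one {R : Type*} [CommRing R] {p q : R}
    (h : IsCoprime p q) : ∃ e : (R × R) ≃ₗ[R] R × R, e (p, q) = (0, 1) := by
  obtain ⟨u, v, huv⟩ := h
  let e : (R × R) ≃ₗ[R] R × R :=
    { toFun x := (q * x.1 - p * x.2, u * x.1 + v * x.2)
      invFun y := (v * y.1 + p * y.2, q * y.2 - u * y.1)
      map_add' x y := by ext <;> dsimp <;> ring
      map_smul' r x := by ext <;> dsimp <;> ring
      left_inv x := by
        ext
        · linear_combination x.1 * huv
        · linear_combination x.2 * huv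
      right_inv y := by
        ext
        · linear_combination y.1 * huv
        · linear_combination y.2 * huv }
  exact ⟨e, Prod.ext (by simp [e, mul_comm]) huv⟩

theorem exists_addEquiv_apply_eq_zero_gcd (p q : ℤ) :
    ∃ e : ℤ × ℤ ≃+ ℤ × ℤ, e (p, q) = (0, (p.gcd q : ℤ)) := by
  obtain ⟨p', q', hp, hq, hpq⟩ := extract_gcd p q
  obtain ⟨e, he⟩ := exists_linearEquiv_apply_eq_zero_one ((gcd_isUnit_iff p' q').1 hpq)
  refine ⟨e.toAddEquiv, ?_⟩
  calc e (p, q) = e (gcd p q • (p', q')) := by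
        rw [Prod.smul_mk, smul_eq_mul, smul_eq_mul, ← hp, ← hq]
    _ = gcd p q • (0, 1) := by rw [map_smul, he]
    _ = (0, (p.gcd q : ℤ)) := by
        rw [Prod.smul_mk, smul_zero, smul_eq_mul, mul_one, Int.coe_gcd]

theorem ker_prodMap_id_intCast (g : ℕ) :
    ((AddMonoidHom.id ℤ).prodMap (Int.castAddHom (ZMod g))).ker = zmultiples (0, (g : ℤ)) := by
  rw [AddMonoidHom.ker_prodMap, ZMod.ker_intCastAddHom]
  ext ⟨x, y⟩
  simp [mem_prod, mem_zmultiples_iff, eq_comm]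

theorem nonempty_quotient_zmultiples_addEquiv (p q : ℤ) :
    Nonempty ((ℤ × ℤ) ⧸ zmultiples (p, q) ≃+ ℤ × ZMod (p.gcd q)) := by
  obtain ⟨e, he⟩ := exists_addEquiv_apply_eq_zero_gcd p q
  let f : ℤ × ℤ →+ ℤ × ZMod (p.gcd q) := (AddMonoidHom.id ℤ).prodMap (Int.castAddHom _)
  have map_e : (zmultiples (p, q)).map (e : ℤ × ℤ →+ ℤ × ℤ) = f.ker := by
    rw [ker_prodMap_id_intCast, AddMonoidHom.map_zmultiples, AddMonoidHom.coe_coe, he]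
  exact ⟨(QuotientAddGroup.congr _ _ e map_e).trans <|
    QuotientAddGroup.quotientKerEquivOfSurjective f <|
      surjective_id.prodMap ZMod.intCast_surjective⟩

theorem abelian_group_ext_computation_pi8_BTOP_general {G : Type*} [AddCommGroup G] {m n : ℕ}
    {a : ℤ →+ G} {b : G →+ ZMod m} (hb : Surjective b) (hab : a.range = b.ker)
    {c : ℤ →+ G} (hc : Injective c) {d : G →+ ZMod n} (hcd : c.range = d.ker)
    (hda : Surjective (d.comp a)) :
    Nonempty (G ≃+ ℤ × ZMod (m.gcd n)) := by
  have range_sup_range : a.range ⊔ c.range = ⊤ :=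
    hcd ▸ (surjective_comp_iff_range_sup_ker_eq_top.1 hda).2
  have hbc : Surjective (b.comp c) :=
    surjective_comp_iff_range_sup_ker_eq_top.2 ⟨hb, by rw [← hab, sup_comm, range_sup_range]⟩
  obtain ⟨q, hq, hker⟩ := exists_ker_coprod_eq_zmultiples hab hc hcd hda hbc
  have gcd_eq : (n : ℤ).gcd q = m.gcd n := by
    rw [Int.gcd_eq_natAbs_gcd_natAbs, Int.natAbs_natCast, hq, Nat.gcd_comm]
  obtain ⟨e⟩ := nonempty_quotient_zmultiples_addEquiv n q
  rw [← hker, gcd_eq] at e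
  exact ⟨(QuotientAddGroup.quotientKerEquivOfSurjective _ <|
    surjective_coprod_iff_range_sup_range_eq_top.2 range_sup_range).symm.trans e⟩

/-- If an abelian group `G` sits in a short exact sequence `0 → ℤ → G → ℤ/28 → 0` and in a
short exact sequence `0 → ℤ → G → ℤ/240 → 0` such that the composite `ℤ → G → ℤ/240` of the
first injection with the second surjection is onto, then `G ≅ ℤ ⊕ ℤ/4`. -/
theorem abelian_group_ext_computation_pi8_BTOP (G : Type*) [AddCommGroup G]
    (a : ℤ →+ G) (ha : Function.Injective a)
    (b : G →+ ZMod 28) (hb : Function.Surjective b)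
    (hab : a.range = b.ker)
    (c : ℤ →+ G) (hc : Function.Injective c)
    (d : G →+ ZMod 240) (hd : Function.Surjective d)
    (hcd : c.range = d.ker)
    (hda : Function.Surjective (d.comp a)) :
    Nonempty (G ≃+ ℤ × ZMod 4) :=
  abelian_group_ext_computation_pi8_BTOP_general hb hab hc hcd hda
end

section
/- Let G be an additive abelian group, i : ℤ → G an injective homomorphism, and p : G → ℤ × ℤ/2 a surjective homomorphism with range i = ker p (a short exact sequence 0 → ℤ → G → ℤ ⊕ ℤ/2 → 0). If i(1) ∉ 2G, then p admits a section, i.e. there is a homomorphism s : ℤ × ℤ/2 → G with p∘s = id. -/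
/-!
A homomorphism out of `ℤ/q` is an element killed by `q`, so the only obstruction to a section of
`G → F ⊕ ℤ/q` over a projective `F` is whether the generator of `ℤ/q` has a lift killed by `q`. Any
lift `b` satisfies `q b = n c`, where `c` generates the kernel. If the prime `q` did not divide `n`,
a Bézout relation between `n` and `q` would make `c` divisible by `q`; hence `n = q k`, and
`b - k c` is the required lift.
-/

section

variable {G A B C : Type*} [AddCommGroup G] [AddCommGroup A] [AddCommGroup B] [AddCommGroup C]

theorem dvd_of_zsmul_eq_nsmul_of_prime {q : ℕ} (hq : q.Prime) {c : G} (hc : ¬ ∃ g : G, c = q • g)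
    {n : ℤ} {g : G} (h : n • c = q • g) : (q : ℤ) ∣ n := by
  by_contra hqn
  obtain ⟨u, v, bezout⟩ : IsCoprime (q : ℤ) n :=
    (Nat.prime_iff_prime_int.mp hq).coprime_iff_not_dvd.mpr hqn
  refine hc ⟨u • c + v • g, ?_⟩
  calc
    c = (u * q + v * n) • c := by rw [bezout, one_zsmul]
    _ = u • q • c + v • n • c := by rw [add_zsmul, mul_zsmul, mul_zsmul, natCast_zsmul]
    _ = q • (u • c + v • g) := by
      rw [h, nsmul_add, smul_comm u q c, smul_comm v q g]

theorem exists_nsmul_eq_zero_of_ker_pure {p : G →+ A} (hp : Function.Surjective p) {n : ℕ}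
    (hpure : ∀ g, n • g ∈ p.ker → ∃ k ∈ p.ker, n • g = n • k) {a : A} (ha : n • a = 0) :
    ∃ g, n • g = 0 ∧ p g = a := by
  obtain ⟨b, rfl⟩ := hp a
  obtain ⟨k, hk, hbk⟩ := hpure b (by rwa [AddMonoidHom.mem_ker, map_nsmul])
  refine ⟨b - k, ?_, ?_⟩
  · rw [nsmul_sub, hbk, sub_self]
  · rw [map_sub, AddMonoidHom.mem_ker.mp hk, sub_zero]

theorem exists_zmod_lift_of_nsmul_eq_zero (p : G →+ A) {n : ℕ} (f : ZMod n →+ A) {g : G}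
    (hg : n • g = 0) (hpg : p g = f 1) : ∃ s : ZMod n →+ G, p.comp s = f := by
  refine ⟨ZMod.lift n ⟨zmultiplesHom G g, by simpa using hg⟩, ?_⟩
  ext x
  obtain ⟨k, rfl⟩ := ZMod.intCast_surjective x
  calc
    p (ZMod.lift n ⟨zmultiplesHom G g, _⟩ (k : ZMod n)) = k • p g := by simp
    _ = f k := by rw [hpg, ← map_zsmul, zsmul_one]

theorem exists_lift_of_projective {p : G →+ A} (hp : Function.Surjective p)
    [Module.Projective ℤ B] (f : B →+ A) : ∃ s : B →+ G, p.comp s = f := by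
  obtain ⟨s, hs⟩ := Module.projective_lifting_property p.toIntLinearMap f.toIntLinearMap hp
  exact ⟨s.toAddMonoidHom, AddMonoidHom.ext fun b => LinearMap.congr_fun hs b⟩

theorem exists_section_of_lift_inl_of_lift_inr {p : G →+ B × C}
    (hB : ∃ s : B →+ G, p.comp s = AddMonoidHom.inl B C)
    (hC : ∃ t : C →+ G, p.comp t = AddMonoidHom.inr B C) :
    ∃ s : B × C →+ G, p.comp s = AddMonoidHom.id (B × C) := by
  obtain ⟨s, hs⟩ := hB
  obtain ⟨t, ht⟩ := hC
  exact ⟨s.coprod t, by rw [AddMonoidHom.comp_coprod, hs, ht, AddMonoidHom.coprod_inl_inr]⟩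

end

theorem splitting_lemma_dim_four_general {G F : Type*} [AddCommGroup G] [AddCommGroup F]
    [Module.Projective ℤ F] {q : ℕ} (hq : q.Prime) {p : G →+ F × ZMod q}
    (hp : Function.Surjective p) {c : G} (hker : AddSubgroup.zmultiples c = p.ker)
    (hc : ¬ ∃ g : G, c = q • g) :
    ∃ s : F × ZMod q →+ G, p.comp s = AddMonoidHom.id (F × ZMod q) := by
  have ker_pure : ∀ g, q • g ∈ p.ker → ∃ k ∈ p.ker, q • g = q • k := by
    rw [← hker]
    rintro g ⟨n, hn : n • c = q • g⟩
    obtain ⟨k, rfl⟩ := dvd_of_zsmul_eq_nsmul_of_prime hq hc hn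
    exact ⟨k • c, ⟨k, rfl⟩, by rw [← hn, mul_zsmul, natCast_zsmul]⟩
  have torsion : q • AddMonoidHom.inr F (ZMod q) 1 = 0 := by
    rw [← map_nsmul, nsmul_one, ZMod.natCast_self, map_zero]
  obtain ⟨g, hg, hpg⟩ := exists_nsmul_eq_zero_of_ker_pure hp ker_pure torsion
  exact exists_section_of_lift_inl_of_lift_inr (exists_lift_of_projective hp _)
    (exists_zmod_lift_of_nsmul_eq_zero p _ hg hpg)

/-- If `0 → ℤ → G → ℤ ⊕ ℤ/2 → 0` is a short exact sequence of abelian groups and the image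
of `1 ∈ ℤ` in `G` is not divisible by `2`, then the sequence splits: the surjection admits a
section. -/
theorem splitting_lemma_dim_four (G : Type*) [AddCommGroup G]
    (i : ℤ →+ G) (hi : Function.Injective i)
    (p : G →+ ℤ × ZMod 2) (hp : Function.Surjective p)
    (hip : i.range = p.ker)
    (h : ¬ ∃ g : G, i 1 = 2 • g) :
    ∃ s : ℤ × ZMod 2 →+ G, p.comp s = AddMonoidHom.id (ℤ × ZMod 2) := by
  have hker : AddSubgroup.zmultiples (i 1) = p.ker := by
    rw [← hip, ← AddMonoidHom.map_zmultiples, Int.zmultiples_one, AddMonoidHom.range_eq_map]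
  exact splitting_lemma_dim_four_general Nat.prime_two hp hker h
end

section
/- The subgroup of the additive group ℚ × ℚ generated by the two elements (2, 0) and (1, 6/7) consists exactly of the pairs (e, p) such that e ∈ ℤ, (7/6)·p ∈ ℤ, and the integer (7/3)·p + 2e is divisible by 4. -/
/-! The generators are in triangular form, so the second coordinate `p` determines the coefficient
`b = (7/6)·p` of `(1, 6/7)`. What is left over, `(e - b, 0)`, is a multiple of `(2, 0)` exactly
when `e + b` is even, and `2 (e + b) = (7/3)·p + 2e`. -/

theorem mk_mem_closure_triangular_pair_iff {A B : Type*} [AddCommGroup A] [AddCommGroup B]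
    {a b x : A} {u y : B} :
    (x, y) ∈ AddSubgroup.closure {(a, 0), (b, u)} ↔
      ∃ n : ℤ, y = n • u ∧ x - n • b ∈ AddSubgroup.zmultiples a := by
  simp only [AddSubgroup.mem_closure_pair, AddSubgroup.mem_zmultiples_iff, Prod.smul_mk,
    Prod.mk_add_mk, Prod.mk.injEq, smul_zero, zero_add, eq_sub_iff_add_eq]
  constructor
  · rintro ⟨m, n, hx, hy⟩
    exact ⟨n, hy.symm, m, hx⟩
  · rintro ⟨n, hy, m, hx⟩
    exact ⟨m, n, hx, hy.symm⟩

theorem euler_pontrjagin_lattice_of_R8_bundles_over_S8_general {K : Type*} [DivisionRing K]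
    {u : K} (hu : u ≠ 0) (e p : K) :
    (e, p) ∈ AddSubgroup.closure {((2 : K), (0 : K)), (1, u)} ↔
      (∃ a : ℤ, e = a) ∧ (∃ b : ℤ, p / u = b) ∧ ∃ c : ℤ, p / u + e = 2 * c := by
  simp only [mk_mem_closure_triangular_pair_iff, AddSubgroup.mem_zmultiples_iff, zsmul_eq_mul,
    mul_one, ← div_eq_iff hu]
  constructor
  · rintro ⟨b, hb, m, hm⟩
    have he : e = (m * 2 + b : ℤ) := by
      push_cast
      exact sub_eq_iff_eq_add.mp hm.symm
    refine ⟨⟨_, he⟩, ⟨b, hb⟩, m + b, ?_⟩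
    have sum_even : b + (m * 2 + b) = 2 * (m + b) := by ring
    rw [hb, he]
    exact_mod_cast congrArg (Int.cast : ℤ → K) sum_even
  · rintro ⟨-, ⟨b, hb⟩, c, hc⟩
    have he : e = (2 * c - b : ℤ) := by
      push_cast
      rw [← hc, hb, add_sub_cancel_left]
    refine ⟨b, hb, c - b, ?_⟩
    have diff_even : (c - b) * 2 = 2 * c - b - b := by ring
    rw [he]
    exact_mod_cast congrArg (Int.cast : ℤ → K) diff_even

/-- The subgroup of `ℚ × ℚ` generated by `(2, 0)` and `(1, 6/7)` consists exactly of the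
pairs `(e, p)` with `e ∈ ℤ`, `(7/6)·p ∈ ℤ`, and the integer `(7/3)·p + 2e` divisible
by `4`. -/
theorem euler_pontrjagin_lattice_of_R8_bundles_over_S8 (e p : ℚ) :
    (e, p) ∈ AddSubgroup.closure ({((2 : ℚ), (0 : ℚ)), ((1 : ℚ), (6 / 7 : ℚ))} : Set (ℚ × ℚ)) ↔
      (∃ a : ℤ, e = (a : ℚ)) ∧ (∃ b : ℤ, (7 / 6) * p = (b : ℚ)) ∧
        ∃ c : ℤ, (7 / 3) * p + 2 * e = 4 * (c : ℚ) := by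
  have p_div : p / (6 / 7) = 7 / 6 * p := by ring
  have even_iff (c : ℤ) : 7 / 3 * p + 2 * e = 4 * (c : ℚ) ↔ 7 / 6 * p + e = 2 * c := by
    constructor <;> intro h <;> linarith
  simpa only [p_div, even_iff] using
    euler_pontrjagin_lattice_of_R8_bundles_over_S8_general (by norm_num : (6 / 7 : ℚ) ≠ 0) e p
end
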